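/- Let A be a real N×p matrix such that AᵀA is invertible, and let Ξ be a real symmetric positive definite N×N matrix. Then the p×p matrix AᵀΞ⁻¹A − (AᵀA)(AᵀΞA)⁻¹(AᵀA) is positive semidefinite; equivalently, for every v ∈ ℝᵖ one has ⟨v, (AᵀA)(AᵀΞA)⁻¹(AᵀA)v⟩² ≤ ⟨v, AᵀΞ⁻¹Av⟩ · ⟨v, (AᵀA)(AᵀΞA)⁻¹(AᵀA)v⟩. (This is the content of Theorem 5.5: with A the stacked gradient ∇_θ X̄ and Ξ the covariance matrix Ξ^{θ,H,n}, the difference of inverse asymptotic variances (M(θ,H;n))⁻¹ − (M^H(θ,H;n))⁻¹ is negative semidefinite, i.e. the minimum contrast estimator has asymptotic variance no larger than the trajectory-fitting estimator.) -/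

import Mathlib

open MeasureTheory ProbabilityTheory Filter Topology

noncomputable section

/-- The correlation function ρ(j;H) of second-order filtered increments of fBm. -/
def rho (H : ℝ) (j : ℤ) : ℝ :=
  (-|(j : ℝ) - 2| ^ (2 * H) + 4 * |(j : ℝ) - 1| ^ (2 * H) - 6 * |(j : ℝ)| ^ (2 * H)
      + 4 * |(j : ℝ) + 1| ^ (2 * H) - |(j : ℝ) + 2| ^ (2 * H)) / (2 * (4 - 2 ^ (2 * H)))

/-- ς₁²(H) := 2 ∑_{j∈ℤ} ρ(j;H)². -/
def varsigma1sq (H : ℝ) : ℝ := 2 * ∑' j : ℤ, (rho H j) ^ 2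

/-- ρ̃(j;H). -/
def rhoTilde (H : ℝ) (j : ℤ) : ℝ :=
  (-|(j : ℝ) - 3| ^ (2 * H) + 2 * |(j : ℝ) - 2| ^ (2 * H) + |(j : ℝ) - 1| ^ (2 * H)
      - 4 * |(j : ℝ)| ^ (2 * H) + |(j : ℝ) + 1| ^ (2 * H) + 2 * |(j : ℝ) + 2| ^ (2 * H)
      - |(j : ℝ) + 3| ^ (2 * H)) / (2 * (4 - 2 ^ (2 * H)) * 2 ^ H)

/-- ς₂²(H) := ∑_{j∈ℤ} ρ̃(j;H)². -/
def varsigma2sq (H : ℝ) : ℝ := ∑' j : ℤ, (rhoTilde H j) ^ 2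

/-- A real-valued process `W` is a fractional Brownian motion with Hurst index `H` under `P`:
its finite-dimensional distributions are centered Gaussian (i.e. every finite linear combination
of values of the process is a centered real Gaussian random variable) with covariance
`E[W_s W_t] = (s^{2H} + t^{2H} - |t-s|^{2H})/2`. -/
def IsFBM {Ω : Type*} [MeasurableSpace Ω] (P : Measure Ω) (W : ℝ → Ω → ℝ) (H : ℝ) : Prop :=
  (∀ t : ℝ, Measurable (W t)) ∧
  (∀ (s : Finset ℝ) (c : ℝ → ℝ), ∃ v : NNReal,
      Measure.map (fun ω => ∑ t ∈ s, c t * W t ω) P = gaussianReal 0 v) ∧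
  (∀ s t : ℝ, 0 ≤ s → 0 ≤ t →
      ∫ ω, W s ω * W t ω ∂P = (s ^ (2 * H) + t ^ (2 * H) - |t - s| ^ (2 * H)) / 2)

/-- The second-order filtered increment
`Δ^{(2)}_{n,k} z = z_{t^n_k} - 2 z_{t^n_{k-1}} + z_{t^n_{k-2}}` with `t^n_k = T k / n`. -/
def Delta2 {Ω : Type*} (T : ℝ) (n k : ℕ) (z : ℝ → Ω → ℝ) (ω : Ω) : ℝ :=
  z (T * k / n) ω - 2 * z (T * ((k : ℝ) - 1) / n) ω + z (T * ((k : ℝ) - 2) / n) ω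

/-- Convergence in distribution (weak convergence of the laws) of real random variables. -/
def TendstoInDistribution {Ω : Type*} [MeasurableSpace Ω] (P : Measure Ω)
    (f : ℕ → Ω → ℝ) (μ : Measure ℝ) : Prop :=
  ∀ g : BoundedContinuousFunction ℝ ℝ,
    Tendsto (fun n => ∫ ω, g (f n ω) ∂P) atTop (𝓝 (∫ x, g x ∂μ))

/-- The squared Frobenius norm |σ|² of a matrix. -/
def frobSq {m mt : ℕ} (σ : Matrix (Fin m) (Fin mt) ℝ) : ℝ := ∑ i, ∑ j, (σ i j) ^ 2

/-- |σ v|², the squared Euclidean norm of the matrix-vector product σ v. -/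
def normSqMulVec {m mt : ℕ} (σ : Matrix (Fin m) (Fin mt) ℝ) (v : Fin mt → ℝ) : ℝ :=
  ∑ i, (∑ j, σ i j * v j) ^ 2

/-- The normalized cross second-order variation
`V^{j,q}_{n,T} = (n^{2H-1}/(T^{2H}(4-2^{2H}))) ∑_{k=2}^n Δ^{(2)}_{n,k} W^{H,j} Δ^{(2)}_{n,k} W^{H,q}`. -/
def Vstat {Ω : Type*} {mt : ℕ} (T H : ℝ) (W : Fin mt → ℝ → Ω → ℝ) (n : ℕ)
    (j q : Fin mt) (ω : Ω) : ℝ :=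
  ((n : ℝ) ^ (2 * H - 1) / (T ^ (2 * H) * (4 - 2 ^ (2 * H)))) *
    ∑ k ∈ Finset.Icc 2 n, Delta2 T n k (W j) ω * Delta2 T n k (W q) ω

/-- The constant `c_σ̄ = (1/|σ̄|⁴) ∑_{i,k} ∑_{j,q} σ̄_{ij} σ̄_{iq} σ̄_{kj} σ̄_{kq}`. -/
def cSigma {m mt : ℕ} (σ : Matrix (Fin m) (Fin mt) ℝ) : ℝ :=
  (1 / (frobSq σ) ^ 2) * ∑ i, ∑ k, ∑ j, ∑ q, σ i j * σ i q * σ k j * σ k q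

/-- φ_{n,T}(x) = (T/n)^{2x} (4 - 2^{2x}). -/
def phi (T : ℝ) (n : ℕ) (x : ℝ) : ℝ := (T / n) ^ (2 * x) * (4 - 2 ^ (2 * x))

end

noncomputable section

open Matrix in
/-- Theorem 5.5: AᵀΞ⁻¹A − (AᵀA)(AᵀΞA)⁻¹(AᵀA) is positive semidefinite; equivalently the stated
Cauchy–Schwarz-type inequality holds for every v. -/
theorem stmt6 {N p : ℕ} (A : Matrix (Fin N) (Fin p) ℝ) (Ξ : Matrix (Fin N) (Fin N) ℝ)
    (hA : IsUnit (Aᵀ * A)) (hΞsymm : Ξ.IsSymm) (hΞ : Ξ.PosDef) :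
    (Aᵀ * Ξ⁻¹ * A - (Aᵀ * A) * (Aᵀ * Ξ * A)⁻¹ * (Aᵀ * A)).PosSemidef ∧
    ∀ v : Fin p → ℝ,
      (v ⬝ᵥ ((Aᵀ * A) * (Aᵀ * Ξ * A)⁻¹ * (Aᵀ * A)).mulVec v) ^ 2 ≤
        (v ⬝ᵥ (Aᵀ * Ξ⁻¹ * A).mulVec v) *
          (v ⬝ᵥ ((Aᵀ * A) * (Aᵀ * Ξ * A)⁻¹ * (Aᵀ * A)).mulVec v) := by
  have hinj : Function.Injective A.mulVec := by
    intro x y hxy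
    have h1 : (Aᵀ * A).mulVec x = (Aᵀ * A).mulVec y := by
      have hxy' : A.mulVec x = A.mulVec y := hxy
      rw [← Matrix.mulVec_mulVec, ← Matrix.mulVec_mulVec, hxy']
    exact Matrix.mulVec_injective_of_isUnit hA h1
  have hM : (Aᵀ * Ξ * A).PosDef := by
    have := hΞ.conjTranspose_mul_mul_same hinj
    rwa [Matrix.conjTranspose_eq_transpose_of_trivial] at this
  have hMu : IsUnit (Aᵀ * Ξ * A).det := (Matrix.isUnit_iff_isUnit_det _).1 hM.isUnit
  have hΞu : IsUnit Ξ.det := (Matrix.isUnit_iff_isUnit_det _).1 hΞ.isUnit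
  have hMt : (Aᵀ * Ξ * A)ᵀ = Aᵀ * Ξ * A := by
    rw [Matrix.transpose_mul, Matrix.transpose_mul, Matrix.transpose_transpose, hΞsymm.eq,
      Matrix.mul_assoc]
  have hGt : (Aᵀ * A)ᵀ = Aᵀ * A := by
    rw [Matrix.transpose_mul, Matrix.transpose_transpose]
  have hK : ((Aᵀ * A) * (Aᵀ * Ξ * A)⁻¹ * (Aᵀ * A)).PosSemidef := by
    have := hM.inv.posSemidef.conjTranspose_mul_mul_same (Aᵀ * A)
    rwa [Matrix.conjTranspose_eq_transpose_of_trivial, hGt] at this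
  have hD : (Aᵀ * Ξ⁻¹ * A - (Aᵀ * A) * (Aᵀ * Ξ * A)⁻¹ * (Aᵀ * A)).PosSemidef := by
    have h := hΞ.posSemidef.conjTranspose_mul_mul_same
      (Ξ⁻¹ * A - A * ((Aᵀ * Ξ * A)⁻¹ * (Aᵀ * A)))
    rw [Matrix.conjTranspose_eq_transpose_of_trivial] at h
    convert h using 1
    have e1 : Ξ * (Ξ⁻¹ * A - A * ((Aᵀ * Ξ * A)⁻¹ * (Aᵀ * A)))
        = A - Ξ * A * ((Aᵀ * Ξ * A)⁻¹ * (Aᵀ * A)) := by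
      rw [Matrix.mul_sub, Matrix.mul_nonsing_inv_cancel_left _ _ hΞu, Matrix.mul_assoc Ξ A]
    have e2 : Aᵀ * (A - Ξ * A * ((Aᵀ * Ξ * A)⁻¹ * (Aᵀ * A))) = 0 := by
      rw [Matrix.mul_sub, ← Matrix.mul_assoc Aᵀ (Ξ * A), ← Matrix.mul_assoc Aᵀ Ξ,
        Matrix.mul_nonsing_inv_cancel_left _ _ hMu, sub_self]
    have e3 : Aᵀ * Ξ⁻¹ * (Ξ * A * ((Aᵀ * Ξ * A)⁻¹ * (Aᵀ * A)))
        = (Aᵀ * A) * (Aᵀ * Ξ * A)⁻¹ * (Aᵀ * A) := by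
      rw [Matrix.mul_assoc Aᵀ Ξ⁻¹, Matrix.mul_assoc Ξ A,
        Matrix.nonsing_inv_mul_cancel_left _ _ hΞu]
      simp only [Matrix.mul_assoc]
    rw [Matrix.mul_assoc _ Ξ (Ξ⁻¹ * A - _), e1, Matrix.transpose_sub, Matrix.sub_mul,
      Matrix.transpose_mul A, Matrix.mul_assoc _ Aᵀ, e2, Matrix.mul_zero, sub_zero,
      Matrix.transpose_mul, Matrix.transpose_nonsing_inv, hΞsymm.eq, Matrix.mul_sub, e3]
  refine ⟨hD, fun v => ?_⟩
  have h1 := hK.dotProduct_mulVec_nonneg v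
  have h2 := hD.dotProduct_mulVec_nonneg v
  rw [star_trivial] at h1 h2
  rw [Matrix.sub_mulVec, dotProduct_sub] at h2
  nlinarith [mul_nonneg h1 h2]

end
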